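/- Let ρ > 0, n ≥ 1, and let H_0 = 1, H_1, …, H_{n−1} be real numbers; let S_n(θ) := Σ_{m=1}^{n}(e^{θ_m}−1) + Σ_{k=1}^{n−1} H_k Σ_{m=k}^{n−1}(e^{θ_{m−k+1}}−1)·exp(Σ_{i=m−k+2}^{m} θ_i)·(e^{θ_{m+1}}−1). Suppose that for each l = 1,2,… the random vector X_l^n = (X_{l,1},…,X_{l,n}) satisfies E exp(Σ_{i=1}^{n} θ_i X_{l,i}) = exp(lρ S_n(θ)) for all θ ∈ ℝⁿ. Then for every fixed θ ∈ ℝⁿ, log E exp(Σ_{i=1}^{n} θ_i (X_{l,i} − lρ)/√(lρ)) → (1/2) θᵀ Σ(H) θ as l → ∞, where Σ(H) is the n×n matrix with entries Σ(H)_{ij} = H_{|i−j|}. Consequently the normalized vectors (X_l^n − lρ e_n)/√(lρ) converge in distribution to the centered n-dimensional Gaussian law with covariance matrix Σ(H). -/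

import Mathlib

open MeasureTheory ProbabilityTheory

/-- `S_n(θ)`: the cumulant-generating-function expression of the sampled
M/G/∞ queue-length process. -/
noncomputable def Sfun (H : ℕ → ℝ) (n : ℕ) (θ : ℕ → ℝ) : ℝ :=
  (∑ m ∈ Finset.Icc 1 n, (Real.exp (θ m) - 1)) +
    ∑ k ∈ Finset.Icc 1 (n - 1), H k *
      ∑ m ∈ Finset.Icc k (n - 1),
        (Real.exp (θ (m - k + 1)) - 1) *
          Real.exp (∑ i ∈ Finset.Icc (m - k + 2) m, θ i) * (Real.exp (θ (m + 1)) - 1)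


noncomputable def SCfun (H : ℕ → ℝ) (n : ℕ) (θ : ℕ → ℂ) : ℂ :=
  (∑ m ∈ Finset.Icc 1 n, (Complex.exp (θ m) - 1)) +
    ∑ k ∈ Finset.Icc 1 (n - 1), (H k : ℂ) *
      ∑ m ∈ Finset.Icc k (n - 1),
        (Complex.exp (θ (m - k + 1)) - 1) *
          Complex.exp (∑ i ∈ Finset.Icc (m - k + 2) m, θ i) * (Complex.exp (θ (m + 1)) - 1)

lemma quad_aux (H w : ℕ → ℂ) (h0 : H 0 = 1) (n : ℕ) :
    (∑ m ∈ Finset.Icc 1 (n+1), w m ^ 2 / 2) +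
      ∑ m ∈ Finset.Icc 1 n, ∑ k ∈ Finset.Icc 1 m, H k * (w (m - k + 1) * w (m + 1)) =
    (1 / 2) * ∑ i ∈ Finset.Icc 1 (n+1), ∑ j ∈ Finset.Icc 1 (n+1),
          w i * w j * H (Nat.dist i j) := by
  induction n with
  | zero => simp [h0]; ring
  | succ n ih =>
    rw [Finset.sum_Icc_succ_top (by omega),
      Finset.sum_Icc_succ_top (a := 1) (b := n) (by omega)
        (fun m => ∑ k ∈ Finset.Icc 1 m, H k * (w (m - k + 1) * w (m + 1))),
      Finset.sum_Icc_succ_top (a := 1) (b := n + 1) (by omega)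
        (fun i => ∑ j ∈ Finset.Icc 1 (n+1+1), w i * w j * H (Nat.dist i j))]
    simp_rw [Finset.sum_Icc_succ_top (a := 1) (b := n + 1) (by omega) (fun j => w _ * w j * H (Nat.dist _ j))]
    rw [Finset.sum_add_distrib]
    have e1 : ∑ k ∈ Finset.Icc 1 (n+1), H k * (w (n + 1 - k + 1) * w (n + 1 + 1)) =
        ∑ i ∈ Finset.Icc 1 (n+1), w i * w (n+1+1) * H (Nat.dist i (n+1+1)) := by
      refine Finset.sum_bij' (fun k _ => n + 2 - k) (fun k _ => n + 2 - k) ?_ ?_ ?_ ?_ ?_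
      · intro a ha; simp at ha ⊢; omega
      · intro a ha; simp at ha ⊢; omega
      · intro a ha; simp at ha ⊢; omega
      · intro a ha; simp at ha ⊢; omega
      · intro a ha
        simp at ha
        have h1 : n + 1 - a + 1 = n + 2 - a := by omega
        have h2 : Nat.dist (n + 2 - a) (n+1+1) = a := by simp [Nat.dist]; omega
        rw [h1, h2]; ring
    have e2 : ∑ i ∈ Finset.Icc 1 (n+1), w i * w (n+1+1) * H (Nat.dist i (n+1+1)) =
       ∑ i ∈ Finset.Icc 1 (n+1), w (n+1+1) * w i * H (Nat.dist (n+1+1) i) := by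
      refine Finset.sum_congr rfl fun i _ => ?_
      rw [Nat.dist_comm]; ring
    rw [e1, ← e2, Nat.dist_self, h0]
    linear_combination ih

lemma quad (H w : ℕ → ℂ) (h0 : H 0 = 1) (n : ℕ) (hn : 1 ≤ n) :
    (∑ m ∈ Finset.Icc 1 n, w m ^ 2 / 2) +
      ∑ k ∈ Finset.Icc 1 (n-1), H k * ∑ m ∈ Finset.Icc k (n-1), w (m - k + 1) * w (m + 1) =
    (1 / 2) * ∑ i ∈ Finset.Icc 1 n, ∑ j ∈ Finset.Icc 1 n,
          w i * w j * H (Nat.dist i j) := by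
  obtain ⟨n, rfl⟩ : ∃ k, n = k + 1 := ⟨n - 1, by omega⟩
  rw [← quad_aux H w h0 n]
  congr 1
  simp_rw [Finset.mul_sum]
  refine Finset.sum_comm' ?_
  intro a b
  simp
  omega

open Filter Topology in
lemma exp1_tendsto (a : ℂ) : Tendsto (fun ε : ℂ => (Complex.exp (ε * a) - 1) / ε) (𝓝[≠] 0) (𝓝 a) := by
  have h : HasDerivAt (fun ε : ℂ => Complex.exp (ε * a)) a 0 := by
    have := ((hasDerivAt_id (0:ℂ)).mul_const a).cexp
    simpa using this
  have := h.tendsto_slope_zero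
  refine this.congr fun x => ?_
  simp [div_eq_inv_mul]

open Filter Topology in
lemma exp2_tendsto (a : ℂ) : Tendsto (fun ε : ℂ => (Complex.exp (ε * a) - 1 - ε * a) / ε ^ 2)
    (𝓝[≠] 0) (𝓝 (a ^ 2 / 2)) := by
  have hb : ∀ᶠ ε : ℂ in 𝓝[≠] 0, ‖(Complex.exp (ε * a) - 1 - ε * a) / ε ^ 2 - a ^ 2 / 2‖ ≤
      ‖ε‖ * ‖a‖ ^ 3 := by
    have h1 : ∀ᶠ ε : ℂ in 𝓝[≠] 0, ‖ε * a‖ ≤ 1 := by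
      have : Tendsto (fun ε : ℂ => ‖ε * a‖) (𝓝[≠] 0) (𝓝 0) := by
        have : Continuous (fun ε : ℂ => ‖ε * a‖) := by fun_prop
        have := (this.tendsto 0).mono_left (nhdsWithin_le_nhds (s := {0}ᶜ))
        simpa using this
      exact this.eventually (eventually_le_nhds (by norm_num))
    filter_upwards [h1, self_mem_nhdsWithin] with ε h hε
    have hε : ε ≠ 0 := hε
    have := Complex.exp_bound h (n := 3) (by norm_num)
    have e : (Complex.exp (ε * a) - 1 - ε * a) / ε ^ 2 - a ^ 2 / 2 =
      (Complex.exp (ε * a) - ∑ m ∈ Finset.range 3, (ε * a) ^ m / (m.factorial : ℂ)) / ε ^ 2 := by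
      simp [Finset.sum_range_succ, Nat.factorial]
      field_simp
      ring
    rw [e, norm_div, norm_pow, div_le_iff₀ (by positivity)]
    refine this.trans ?_
    rw [norm_mul]
    have : 0 ≤ (‖ε‖ * ‖a‖) ^ 3 := by positivity
    norm_num [Nat.factorial]
    nlinarith
  rw [tendsto_iff_norm_sub_tendsto_zero]
  refine squeeze_zero' (Eventually.of_forall fun _ => norm_nonneg _) hb ?_
  have : Continuous (fun ε : ℂ => ‖ε‖ * ‖a‖ ^ 3) := by fun_prop
  have := (this.tendsto 0).mono_left (nhdsWithin_le_nhds (s := {0}ᶜ))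
  simpa using this

open Filter Topology in
lemma SC_tendsto (H : ℕ → ℝ) (w : ℕ → ℂ) (h0 : H 0 = 1) (n : ℕ) (hn : 1 ≤ n) :
    Tendsto (fun ε : ℂ => (SCfun H n (fun i => ε * w i) - ε * ∑ i ∈ Finset.Icc 1 n, w i) / ε ^ 2)
      (𝓝[≠] 0) (𝓝 ((1 / 2) * ∑ i ∈ Finset.Icc 1 n, ∑ j ∈ Finset.Icc 1 n,
          w i * w j * (H (Nat.dist i j) : ℂ))) := by
  rw [← quad (fun k => (H k : ℂ)) w (by simp [h0]) n hn]
  have : Tendsto (fun ε : ℂ => (∑ m ∈ Finset.Icc 1 n, (Complex.exp (ε * w m) - 1 - ε * w m) / ε ^ 2) +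
    ∑ k ∈ Finset.Icc 1 (n - 1), (H k : ℂ) *
      ∑ m ∈ Finset.Icc k (n - 1),
        ((Complex.exp (ε * w (m - k + 1)) - 1) / ε) *
          Complex.exp (∑ i ∈ Finset.Icc (m - k + 2) m, ε * w i) * ((Complex.exp (ε * w (m + 1)) - 1) / ε))
      (𝓝[≠] 0) (𝓝 ((∑ m ∈ Finset.Icc 1 n, w m ^ 2 / 2) +
      ∑ k ∈ Finset.Icc 1 (n-1), (H k : ℂ) * ∑ m ∈ Finset.Icc k (n-1), w (m - k + 1) * 1 * w (m + 1))) := by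
    refine Tendsto.add (tendsto_finsetSum _ fun m _ => exp2_tendsto _)
      (tendsto_finsetSum _ fun k _ => Tendsto.const_mul _ (tendsto_finsetSum _ fun m _ =>
        ((exp1_tendsto _).mul ?_).mul (exp1_tendsto _)))
    have : Continuous (fun ε : ℂ => Complex.exp (∑ i ∈ Finset.Icc (m - k + 2) m, ε * w i)) := by fun_prop
    have := (this.tendsto 0).mono_left (nhdsWithin_le_nhds (s := {0}ᶜ))
    simpa using this
  simp only [mul_one] at this
  refine this.congr' ?_
  filter_upwards [self_mem_nhdsWithin] with ε hε
  have hε : ε ≠ 0 := hε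
  rw [eq_div_iff (by positivity), add_mul, SCfun, Finset.sum_mul, Finset.sum_mul, Finset.mul_sum,
    add_sub_right_comm, ← Finset.sum_sub_distrib]
  congr 1
  · refine Finset.sum_congr rfl fun m _ => ?_
    field_simp
  · refine Finset.sum_congr rfl fun m _ => ?_
    rw [mul_assoc, Finset.sum_mul]
    congr 1
    refine Finset.sum_congr rfl fun m _ => ?_
    field_simp

lemma SC_ofReal (H : ℕ → ℝ) (n : ℕ) (θ : ℕ → ℝ) :
    SCfun H n (fun i => (θ i : ℂ)) = ((Sfun H n θ : ℝ) : ℂ) := by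
  simp [SCfun, Sfun]

lemma SC_diff (H : ℕ → ℝ) (n : ℕ) (θ : ℕ → ℂ) :
    Differentiable ℂ (fun z : ℂ => SCfun H n (fun i => z * θ i)) := by
  unfold SCfun
  fun_prop

open Filter Topology in
lemma complexMGF_eq_of_entire {Ω : Type*} [MeasurableSpace Ω] (μ : Measure Ω) (Z : Ω → ℝ) (F : ℂ → ℂ)
    (hF : Differentiable ℂ F) (hi : ∀ t : ℝ, Integrable (fun ω => Real.exp (t * Z ω)) μ)
    (h : ∀ t : ℝ, ((mgf Z μ t : ℝ) : ℂ) = F t) : complexMGF Z μ = F := by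
  have hs : integrableExpSet Z μ = Set.univ := by
    ext t; simpa [integrableExpSet] using hi t
  have hX : AnalyticOnNhd ℂ (complexMGF Z μ) Set.univ := by
    have := analyticOnNhd_complexMGF (X := Z) (μ := μ)
    simpa [hs] using this
  have hY : AnalyticOnNhd ℂ F Set.univ := hF.differentiableOn.analyticOnNhd isOpen_univ
  have := AnalyticOnNhd.eqOn_of_preconnected_of_frequently_eq hX hY isPreconnected_univ
    (z₀ := ((0:ℝ) : ℂ)) (by simp) ?_
  · ext z; exact this (Set.mem_univ z)
  have h_real : ∃ᶠ (x : ℝ) in 𝓝[≠] 0, complexMGF Z μ x = F x := by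
    refine .of_forall fun y ↦ ?_
    rw [complexMGF_ofReal, h]
  rw [frequently_iff_seq_forall] at h_real ⊢
  obtain ⟨xs, hx_tendsto, hx_eq⟩ := h_real
  refine ⟨fun n ↦ xs n, ?_, fun n ↦ ?_⟩
  · rw [tendsto_nhdsWithin_iff] at hx_tendsto ⊢
    constructor
    · rw [Filter.tendsto_ofReal_iff]
      exact hx_tendsto.1
    · simpa using hx_tendsto.2
  · simp [hx_eq]

/-- The quadratic form. -/
noncomputable def Qf (H : ℕ → ℝ) (n : ℕ) (θ : ℕ → ℝ) : ℝ :=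
  (1 / 2) * ∑ i ∈ Finset.Icc 1 n, ∑ j ∈ Finset.Icc 1 n, θ i * θ j * H (Nat.dist i j)

/-- The normalized linear functional. -/
noncomputable def Zf {Ω : Type*} (ρ : ℝ) (n : ℕ) (X : ℕ → ℕ → Ω → ℝ) (θ : ℕ → ℝ) (l : ℕ) (ω : Ω) : ℝ :=
  ∑ i ∈ Finset.Icc 1 n, θ i * ((X l i ω - (l : ℝ) * ρ) / Real.sqrt ((l : ℝ) * ρ))

lemma Zf_complexMGF {Ω : Type*} [MeasureSpace Ω] [IsProbabilityMeasure (ℙ : Measure Ω)]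
    (ρ : ℝ) (hρ : 0 < ρ) (n : ℕ) (H : ℕ → ℝ)
    (X : ℕ → ℕ → Ω → ℝ)
    (hmgf : ∀ l : ℕ, 1 ≤ l → ∀ θ : ℕ → ℝ,
      Integrable (fun ω => Real.exp (∑ i ∈ Finset.Icc 1 n, θ i * X l i ω)) ∧
        ∫ ω, Real.exp (∑ i ∈ Finset.Icc 1 n, θ i * X l i ω) =
          Real.exp ((l : ℝ) * ρ * Sfun H n θ)) (θ : ℕ → ℝ) (l : ℕ) (hl : 1 ≤ l) (z : ℂ) :
    complexMGF (Zf ρ n X θ l) ℙ z =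
      Complex.exp ((SCfun H n (fun i => (((Real.sqrt ((l : ℝ) * ρ))⁻¹ : ℝ) : ℂ) * (z * θ i)) -
        (((Real.sqrt ((l : ℝ) * ρ))⁻¹ : ℝ) : ℂ) * ∑ i ∈ Finset.Icc 1 n, z * θ i) /
          (((Real.sqrt ((l : ℝ) * ρ))⁻¹ : ℝ) : ℂ) ^ 2) := by
  have hl' : (0 : ℝ) < l := by exact_mod_cast hl
  have hpos : 0 < (l : ℝ) * ρ := by positivity
  set s := Real.sqrt ((l : ℝ) * ρ) with hs
  have hs0 : 0 < s := Real.sqrt_pos.mpr hpos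
  have hs2 : (l : ℝ) * ρ = s ^ 2 := (Real.sq_sqrt hpos.le).symm
  have key : ∀ t : ℝ, ∀ ω, Real.exp (t * Zf ρ n X θ l ω) =
      Real.exp (- (s * ∑ i ∈ Finset.Icc 1 n, t * θ i)) *
        Real.exp (∑ i ∈ Finset.Icc 1 n, (s⁻¹ * (t * θ i)) * X l i ω) := by
    intro t ω
    rw [← Real.exp_add]
    congr 1
    rw [Zf, ← hs, Finset.mul_sum, Finset.mul_sum, ← Finset.sum_neg_distrib, ← Finset.sum_add_distrib]
    refine Finset.sum_congr rfl fun i _ => ?_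
    rw [hs2]
    field_simp
    ring
  refine congrFun (complexMGF_eq_of_entire ℙ (Zf ρ n X θ l) (fun z : ℂ =>
    Complex.exp ((SCfun H n (fun i => ((s⁻¹ : ℝ) : ℂ) * (z * θ i)) -
        ((s⁻¹ : ℝ) : ℂ) * ∑ i ∈ Finset.Icc 1 n, z * θ i) / ((s⁻¹ : ℝ) : ℂ) ^ 2)) ?_ ?_ ?_) z
  · have h1 := SC_diff H n (fun i => ((s⁻¹ : ℝ) : ℂ) * θ i)
    have h2 : (fun z : ℂ => SCfun H n (fun i => ((s⁻¹ : ℝ) : ℂ) * (z * θ i))) =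
      (fun z : ℂ => SCfun H n (fun i => z * (((s⁻¹ : ℝ) : ℂ) * θ i))) := by
      funext z; congr 1; funext i; ring
    rw [← h2] at h1
    fun_prop
  · intro t
    simp_rw [key t]
    exact ((hmgf l hl _).1).const_mul _
  · intro t
    rw [mgf]
    simp_rw [key t]
    rw [integral_const_mul, (hmgf l hl _).2, ← Real.exp_add, Complex.ofReal_exp]
    congr 1
    have := SC_ofReal H n (fun i => s⁻¹ * (t * θ i))
    simp only [Complex.ofReal_mul] at this
    rw [this, hs2]
    push_cast
    have : (s : ℂ) ≠ 0 := by exact_mod_cast hs0.ne'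
    field_simp
    ring

open Filter Topology in
lemma eps_tendsto (ρ : ℝ) (hρ : 0 < ρ) :
    Tendsto (fun l : ℕ => (((Real.sqrt ((l : ℝ) * ρ))⁻¹ : ℝ) : ℂ)) atTop (𝓝[≠] 0) := by
  rw [tendsto_nhdsWithin_iff]
  constructor
  · have h1 : Tendsto (fun l : ℕ => (Real.sqrt ((l : ℝ) * ρ))⁻¹) atTop (𝓝 0) :=
      (Real.tendsto_sqrt_atTop.comp
        (tendsto_natCast_atTop_atTop.atTop_mul_const hρ)).inv_tendsto_atTop
    exact (Filter.tendsto_ofReal_iff (x := 0)).mpr h1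
  · filter_upwards [eventually_ge_atTop 1] with l hl
    have hl' : (0 : ℝ) < l := by exact_mod_cast hl
    have : 0 < Real.sqrt ((l : ℝ) * ρ) := Real.sqrt_pos.mpr (by positivity)
    have : (Real.sqrt ((l : ℝ) * ρ))⁻¹ ≠ 0 := by positivity
    simpa using this

open Filter Topology in
lemma Zf_tendsto {Ω : Type*} [MeasureSpace Ω] [IsProbabilityMeasure (ℙ : Measure Ω)]
    (ρ : ℝ) (hρ : 0 < ρ) (n : ℕ) (hn : 1 ≤ n) (H : ℕ → ℝ) (hH0 : H 0 = 1)
    (X : ℕ → ℕ → Ω → ℝ)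
    (hmgf : ∀ l : ℕ, 1 ≤ l → ∀ θ : ℕ → ℝ,
      Integrable (fun ω => Real.exp (∑ i ∈ Finset.Icc 1 n, θ i * X l i ω)) ∧
        ∫ ω, Real.exp (∑ i ∈ Finset.Icc 1 n, θ i * X l i ω) =
          Real.exp ((l : ℝ) * ρ * Sfun H n θ)) (θ : ℕ → ℝ) (z : ℂ) :
    Tendsto (fun l : ℕ => complexMGF (Zf ρ n X θ l) ℙ z) atTop
      (𝓝 (Complex.exp (z ^ 2 * (Qf H n θ : ℝ)))) := by
  have h := (SC_tendsto H (fun i => z * θ i) hH0 n hn).comp (eps_tendsto ρ hρ)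
  have h2 := h.cexp
  have e : (1 / 2 : ℂ) * ∑ i ∈ Finset.Icc 1 n, ∑ j ∈ Finset.Icc 1 n,
          (z * θ i) * (z * θ j) * (H (Nat.dist i j) : ℂ) = z ^ 2 * (Qf H n θ : ℝ) := by
    rw [Qf]
    push_cast
    rw [mul_left_comm]
    congr 1
    simp_rw [Finset.mul_sum]
    refine Finset.sum_congr rfl fun i _ => Finset.sum_congr rfl fun j _ => ?_
    ring
  rw [e] at h2
  refine h2.congr' ?_
  filter_upwards [eventually_ge_atTop 1] with l hl
  rw [Zf_complexMGF ρ hρ n H X hmgf θ l hl z]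
  rfl

/-- Extension of a vector to natural indices starting at one. -/
noncomputable def extv {n : ℕ} (θ : Fin n → ℝ) (m : ℕ) : ℝ :=
  if h : m - 1 < n then θ ⟨m - 1, h⟩ else 0

lemma extv_succ {n : ℕ} (θ : Fin n → ℝ) (i : Fin n) : extv θ ((i : ℕ) + 1) = θ i := by
  simp [extv]

lemma sum_Icc_fin (n : ℕ) (f : ℕ → ℝ) :
    ∑ i ∈ Finset.Icc 1 n, f i = ∑ i : Fin n, f ((i : ℕ) + 1) := by
  rw [Fin.sum_univ_eq_sum_range (fun i => f (i + 1)), Finset.range_eq_Ico,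
    Finset.sum_Ico_add' f 0 n 1]
  rfl

lemma Qf_extv (H : ℕ → ℝ) (n : ℕ) (θ : Fin n → ℝ) : Qf H n (extv θ) =
    (1 / 2) * ∑ i : Fin n, ∑ j : Fin n, θ i * θ j * H (Nat.dist (i : ℕ) (j : ℕ)) := by
  rw [Qf]
  simp_rw [sum_Icc_fin, extv_succ, Nat.dist_add_add_right]

/-- The Toeplitz covariance matrix. -/
def covM (H : ℕ → ℝ) (n : ℕ) : Matrix (Fin n) (Fin n) ℝ :=
  Matrix.of fun i j => H (Nat.dist (i : ℕ) (j : ℕ))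

open Matrix in
lemma Qf_covM (H : ℕ → ℝ) (n : ℕ) (θ : Fin n → ℝ) : Qf H n (extv θ) =
    (θ ⬝ᵥ covM H n *ᵥ θ) / 2 := by
  rw [Qf_extv, one_div, div_eq_inv_mul]
  congr 1
  simp only [dotProduct, mulVec, covM, Matrix.of_apply, Finset.mul_sum]
  refine Finset.sum_congr rfl fun i _ => Finset.sum_congr rfl fun j _ => ?_
  ring

/-- Gaussian approximation to the finite-dimensional distributions of the
M/G/∞ queue-length process as the arrival rate grows: the log-MGFs of the normalized
vectors converge to the Gaussian one, and the normalized vectors converge in distribution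
to the centered Gaussian law with covariance matrix `Σ(H)_{ij} = H_{|i−j|}`. -/
theorem stmt3 {Ω : Type*} [MeasureSpace Ω] [IsProbabilityMeasure (ℙ : Measure Ω)]
    (ρ : ℝ) (hρ : 0 < ρ) (n : ℕ) (hn : 1 ≤ n) (H : ℕ → ℝ) (hH0 : H 0 = 1)
    (X : ℕ → ℕ → Ω → ℝ)
    (hmgf : ∀ l : ℕ, 1 ≤ l → ∀ θ : ℕ → ℝ,
      Integrable (fun ω => Real.exp (∑ i ∈ Finset.Icc 1 n, θ i * X l i ω)) ∧
        ∫ ω, Real.exp (∑ i ∈ Finset.Icc 1 n, θ i * X l i ω) =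
          Real.exp ((l : ℝ) * ρ * Sfun H n θ)) :
    (∀ θ : ℕ → ℝ,
      Filter.Tendsto (fun l : ℕ =>
          Real.log (∫ ω, Real.exp (∑ i ∈ Finset.Icc 1 n,
            θ i * ((X l i ω - (l : ℝ) * ρ) / Real.sqrt ((l : ℝ) * ρ)))))
        Filter.atTop
        (nhds ((1 / 2) * ∑ i ∈ Finset.Icc 1 n, ∑ j ∈ Finset.Icc 1 n,
          θ i * θ j * H (Nat.dist i j)))) ∧
    ∃ μG : Measure (Fin n → ℝ), IsProbabilityMeasure μG ∧
      (∀ θ : Fin n → ℝ,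
        ∫ x, Real.exp (∑ i, θ i * x i) ∂μG =
          Real.exp ((1 / 2) * ∑ i : Fin n, ∑ j : Fin n,
            θ i * θ j * H (Nat.dist (i : ℕ) (j : ℕ)))) ∧
      ∀ f : BoundedContinuousFunction (Fin n → ℝ) ℝ,
        Filter.Tendsto (fun l : ℕ =>
            ∫ ω, f (fun i : Fin n =>
              (X l ((i : ℕ) + 1) ω - (l : ℝ) * ρ) / Real.sqrt ((l : ℝ) * ρ)))
          Filter.atTop (nhds (∫ x, f x ∂μG)) := by
  have hT := Zf_tendsto ρ hρ n hn H hH0 X hmgf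
  refine ⟨?_, ?_⟩
  · intro θ
    have h1 := hT θ ((1 : ℝ) : ℂ)
    simp_rw [complexMGF_ofReal] at h1
    have e : Complex.exp (((1 : ℝ) : ℂ) ^ 2 * (Qf H n θ : ℝ)) = ((Real.exp (Qf H n θ) : ℝ) : ℂ) := by
      simp
    rw [e, Filter.tendsto_ofReal_iff] at h1
    have h2 := h1.log (Real.exp_ne_zero _)
    rw [Real.log_exp] at h2
    simpa [mgf, Zf, Qf] using h2
  have hQ : ∀ θ : ℕ → ℝ, 0 ≤ Qf H n θ := by
    intro θ
    have h1 := (hT θ Complex.I).norm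
    have h2 : ‖Complex.exp (Complex.I ^ 2 * (Qf H n θ : ℝ))‖ ≤ 1 := by
      refine le_of_tendsto h1 (Filter.Eventually.of_forall fun l => ?_)
      refine norm_complexMGF_le_mgf.trans ?_
      simp
    rw [Complex.norm_exp] at h2
    simpa using h2
  have hX : ∀ l : ℕ, 1 ≤ l → ∀ i ∈ Finset.Icc 1 n, AEMeasurable (X l i) := by
    intro l hl i hi
    have h1 := (hmgf l hl (Pi.single i 1)).1.aemeasurable
    have h2 : ∀ ω, ∑ j ∈ Finset.Icc 1 n, (Pi.single i 1 : ℕ → ℝ) j * X l j ω = X l i ω := by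
      intro ω
      rw [Finset.sum_eq_single i]
      · simp
      · intro j _ hj; simp [hj]
      · intro h; exact absurd hi h
    simp_rw [h2] at h1
    exact Real.aemeasurable_of_aemeasurable_exp h1
  have hS : (covM H n).PosSemidef := by
    refine Matrix.PosSemidef.of_dotProduct_mulVec_nonneg ?_ ?_
    · ext i j
      simp [covM, Nat.dist_comm]
    · intro x
      have := hQ (extv x)
      rw [Qf_covM] at this
      simp only [star_trivial]
      linarith
  let γ : Measure (EuclideanSpace ℝ (Fin n)) := multivariateGaussian 0 (covM H n)
  have hofLp : Measurable (fun x : EuclideanSpace ℝ (Fin n) => (x : Fin n → ℝ)) := by fun_prop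
  refine ⟨γ.map (fun x : EuclideanSpace ℝ (Fin n) => (x : Fin n → ℝ)), Measure.isProbabilityMeasure_map hofLp.aemeasurable,
    ?_, ?_⟩
  · intro θ
    rw [integral_map hofLp.aemeasurable (Continuous.aestronglyMeasurable (by fun_prop)), ← Qf_extv, Qf_covM]
    have h1 := IsGaussian.map_eq_gaussianReal (μ := γ) (innerSL ℝ (WithLp.toLp 2 θ))
    have h2 := mgf_gaussianReal h1 1
    have hint : ∫ x, (innerSL ℝ (WithLp.toLp 2 θ)) x ∂γ = 0 := by
      rw [ContinuousLinearMap.integral_comp_id_comm IsGaussian.integrable_id]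
      simp [γ]
    have hvar : Var[(innerSL ℝ (WithLp.toLp 2 θ)); γ] = dotProduct θ (Matrix.mulVec (covM H n) θ) := by
      have := covarianceBilin_self (μ := γ) IsGaussian.memLp_two_id (WithLp.toLp 2 θ)
      rw [covarianceBilin_multivariateGaussian hS] at this
      exact this.symm
    rw [hint, hvar] at h2
    have h3 : 0 ≤ dotProduct θ (Matrix.mulVec (covM H n) θ) := by
      have := hQ (extv θ)
      rw [Qf_covM] at this
      linarith
    rw [Real.coe_toNNReal _ h3] at h2
    simp only [mgf, one_mul, zero_mul, zero_add, one_pow, mul_one] at h2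
    rw [← h2]
    refine integral_congr_ae (Filter.Eventually.of_forall fun x => ?_)
    simp [PiLp.inner_apply, mul_comm]
  · intro f
    rw [← Filter.tendsto_add_atTop_iff_nat 1]
    let V : ℕ → Ω → EuclideanSpace ℝ (Fin n) := fun l ω => WithLp.toLp 2 (fun i : Fin n =>
              (X l ((i : ℕ) + 1) ω - (l : ℝ) * ρ) / Real.sqrt ((l : ℝ) * ρ))
    have hV : ∀ l, AEMeasurable (V (l + 1)) := by
      intro l
      refine (WithLp.measurable_toLp 2 _).comp_aemeasurable (aemeasurable_pi_lambda _ fun i => ?_)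
      have := hX (l + 1) (by omega) (i + 1) (by simp)
      fun_prop
    let P : ℕ → ProbabilityMeasure (EuclideanSpace ℝ (Fin n)) := fun l =>
      ⟨(ℙ : Measure Ω).map (V (l + 1)), Measure.isProbabilityMeasure_map (hV l)⟩
    let P0 : ProbabilityMeasure (EuclideanSpace ℝ (Fin n)) := ⟨γ, inferInstance⟩
    have hP : Filter.Tendsto P Filter.atTop (nhds P0) := by
      refine ProbabilityMeasure.tendsto_of_tendsto_charFun fun t => ?_
      have h1 := (Filter.tendsto_add_atTop_iff_nat 1).mpr (hT (extv t) Complex.I)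
      have h2 : charFun (P0 : Measure (EuclideanSpace ℝ (Fin n))) t =
          Complex.exp (Complex.I ^ 2 * (Qf H n (extv t) : ℝ)) := by
        change charFun γ t = _
        rw [charFun_multivariateGaussian hS, Qf_covM]
        congr 1
        simp
      rw [h2]
      refine h1.congr fun l => ?_
      change _ = charFun ((ℙ : Measure Ω).map (V (l + 1))) t
      rw [charFun_apply, integral_map (hV l) (by fun_prop), complexMGF]
      refine integral_congr_ae (Filter.Eventually.of_forall fun ω => ?_)
      simp only [Zf, sum_Icc_fin, extv_succ, V, PiLp.inner_apply]
      simp [mul_comm]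
    rw [ProbabilityMeasure.tendsto_iff_forall_integral_tendsto] at hP
    have h1 := hP (f.compContinuous ⟨fun x => (x : Fin n → ℝ), by fun_prop⟩)
    have h2 : ∫ x, f x ∂(γ.map (fun x : EuclideanSpace ℝ (Fin n) => (x : Fin n → ℝ))) =
        ∫ x, (f.compContinuous ⟨fun x : EuclideanSpace ℝ (Fin n) => (x : Fin n → ℝ), by fun_prop⟩) x ∂γ := by
      rw [integral_map hofLp.aemeasurable f.continuous.aestronglyMeasurable]
      rfl
    rw [h2]
    refine h1.congr fun l => ?_
    change ∫ x, _ ∂((ℙ : Measure Ω).map (V (l + 1))) = _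
    rw [integral_map (hV l) (BoundedContinuousFunction.continuous _).aestronglyMeasurable]
    rfl
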